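/- Let n, k, m be positive integers with k ≥ n+1, let 1 ≤ l ≤ n, and let 𝐩 = (p_l,…,p_{n−1}) ∈ ℕ≥1^{n−l}. Then for every t with l ≤ t ≤ n−1, Σ_{r=l}^{t} B_{l,r}(𝐩) Σ_{𝐤∈I(k,r)} C_{l,r}(𝐩,𝐤) = B_{l,t}(𝐩) Σ_{𝐤∈I(k,t)} (1/m^{k_t}) C_{l,t+1}(𝐩,𝐤). -/

import Mathlib

open Finset

/-- `PS p j` is the partial sum `p₁ + ⋯ + p_j` of the positive integers
`pᵢ = p (i-1) + 1` encoded by `p : Fin N → ℕ`. -/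
def PS {N : ℕ} (p : Fin N → ℕ) (j : ℕ) : ℕ :=
  ∑ i ∈ Finset.univ.filter (fun i : Fin N => (i : ℕ) < j), (p i + 1)

/-- `Ikr n k r` is the set `I(k,r)` of tuples `(k₁,…,kₙ)` of positive integers with
`kₙ ≥ 2`, `k₁ + ⋯ + kₙ = k` and `k₁ = ⋯ = k_{r-1} = 1`; the tuple is encoded as
`kv : Fin n → ℕ` with `k_j = kv (j-1)`. -/
def Ikr (n k r : ℕ) : Finset (Fin n → ℕ) :=
  (Fintype.piFinset fun _ : Fin n => Finset.range (k + 1)).filter fun kv =>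
    (∀ i, 1 ≤ kv i) ∧ (∀ i : Fin n, (i : ℕ) = n - 1 → 2 ≤ kv i) ∧
      (∑ i, kv i) = k ∧ ∀ i : Fin n, (i : ℕ) + 2 ≤ r → kv i = 1

/-- `kval n kv j` is `k_j`, the `j`-th (1-indexed) component of the tuple encoded by
`kv : Fin n → ℕ`. -/
def kval (n : ℕ) (kv : Fin n → ℕ) (j : ℕ) : ℕ :=
  if h : j - 1 < n then kv ⟨j - 1, h⟩ else 0

/-- `Bf n l r p = B_{l,r}(𝐩) = 1/(p_l(p_l+p_{l+1})⋯(p_l+⋯+p_{r-1}))`, where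
`p : Fin (n-l) → ℕ` encodes the positive integers `(p_l,…,p_{n-1})` via
`p_{l+i} = p i + 1`, so that `p_l + ⋯ + p_{l+j-1} = PS p j`. -/
noncomputable def Bf (n l r : ℕ) (p : Fin (n - l) → ℕ) : ℝ :=
  ∏ j ∈ Finset.Icc 1 (r - l), ((PS p j : ℕ) : ℝ)⁻¹

/-- `Cf n m l r p kv = C_{l,r}(𝐩,𝐤) = 1/((m+p_l+⋯+p_{r-1})^{k_r}⋯(m+p_l+⋯+p_{n-1})^{k_n})`. -/
noncomputable def Cf (n m l r : ℕ) (p : Fin (n - l) → ℕ) (kv : Fin n → ℕ) : ℝ :=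
  ∏ j ∈ Finset.Icc r n, (((m + PS p (j - l) : ℕ) : ℝ) ^ kval n kv j)⁻¹

/-- `Af m l = A_l = ∑_{(p₁,…,p_{l-1}), p₁+⋯+p_{l-1}<m} 1/(p₁(p₁+p₂)⋯(p₁+⋯+p_{l-1}))`. -/
noncomputable def Af (m l : ℕ) : ℝ :=
  ∑ q ∈ (Fintype.piFinset fun _ : Fin (l - 1) => Finset.range m).filter
      (fun q => (∑ i, (q i + 1)) < m),
    ∏ j ∈ Finset.Icc 1 (l - 1), ((PS q j : ℕ) : ℝ)⁻¹

/-!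
Both sides agree at `t = l`, and the right-hand side grows by exactly the summand `r = t + 1`
when `t` becomes `t + 1`. Put `P = p_l + ⋯ + p_t`, so that `B_{l,t} = P B_{l,t+1}`. A tuple in
`I(k,t)` arises from a unique tuple in `I(k,t+1)` by splitting `1 + k_{t+1}` into two positive
parts `a` and `b` at the positions `t` and `t + 1`, and for fixed `c = k_{t+1}` the geometric sum
`P ∑_{a + b = c + 1} m^{-a} (m + P)^{-b} = m^{-c} - (m + P)^{-c}`
leaves the new right-hand side minus the new summand.
-/

section Redistribute

variable {ι : Type*} [DecidableEq ι] {i j : ι} {a b : ℕ} {f : ι → ℕ}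

/-- The tuple with `a` at position `i` and the rest `f i + f j - a` of the sum of the two entries
at position `j`. The subtraction is truncated, so the total is preserved only for
`a ≤ f i + f j`. The same operation serves both to split an entry and to undo the splitting. -/
def redistribute (i j : ι) (a : ℕ) (f : ι → ℕ) : ι → ℕ :=
  Function.update (Function.update f i a) j (f i + f j - a)

theorem redistribute_apply_left (hij : i ≠ j) : redistribute i j a f i = a := by
  simp [redistribute, hij]

theorem redistribute_apply_right : redistribute i j a f j = f i + f j - a := by
  simp [redistribute]

theorem redistribute_apply_of_ne {x : ι} (hi : x ≠ i) (hj : x ≠ j) :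
    redistribute i j a f x = f x := by
  simp [redistribute, hi, hj]

theorem redistribute_eq_self (i j : ι) (f : ι → ℕ) : redistribute i j (f i) f = f := by
  simp [redistribute]

theorem redistribute_redistribute (hij : i ≠ j) (ha : a ≤ f i + f j) :
    redistribute i j b (redistribute i j a f) = redistribute i j b f := by
  funext x
  by_cases hj : x = j
  · subst hj
    simp only [redistribute_apply_right, redistribute_apply_left hij, add_tsub_cancel_of_le ha]
  by_cases hi : x = i
  · subst hi
    simp only [redistribute_apply_left hij]
  · simp only [redistribute_apply_of_ne hi hj]

theorem sum_redistribute [Fintype ι] (hij : i ≠ j) (ha : a ≤ f i + f j) :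
    ∑ x, redistribute i j a f x = ∑ x, f x := by
  have hsplit (g : ι → ℕ) : ∑ x, g x = g i + g j + ∑ x ∈ (univ.erase i).erase j, g x := by
    rw [add_assoc, add_sum_erase _ g (mem_erase.mpr ⟨hij.symm, mem_univ j⟩),
      add_sum_erase _ g (mem_univ i)]
  rw [hsplit (redistribute i j a f), hsplit f, redistribute_apply_left hij,
    redistribute_apply_right, add_tsub_cancel_of_le ha]
  congr 1
  refine sum_congr rfl fun x hx => ?_
  obtain ⟨hj, hi, -⟩ := by simpa only [mem_erase] using hx
  exact redistribute_apply_of_ne hi hj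

end Redistribute

theorem sub_mul_sum_inv_pow_mul_inv_pow {K : Type*} [Field K] {x y : K} (hx : x ≠ 0) (hy : y ≠ 0)
    (c : ℕ) :
    (y - x) * ∑ a ∈ Icc 1 c, (x ^ a)⁻¹ * (y ^ (c + 1 - a))⁻¹ = (x ^ c)⁻¹ - (y ^ c)⁻¹ := by
  have hgeom := (Commute.all x⁻¹ y⁻¹).mul_geom_sum₂_Ico (Nat.le_add_left 1 c)
  have hfactor : ∑ a ∈ Icc 1 c, (x ^ a)⁻¹ * (y ^ (c + 1 - a))⁻¹ =
      y⁻¹ * ∑ a ∈ Ico 1 (c + 1), x⁻¹ ^ a * y⁻¹ ^ (c + 1 - 1 - a) := by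
    rw [mul_sum]
    refine sum_congr rfl fun a ha => ?_
    obtain ⟨-, hac⟩ := mem_Icc.mp ha
    rw [show c + 1 - a = c - a + 1 by omega]
    simp only [inv_pow, add_tsub_cancel_right, pow_succ, mul_inv]
    ring
  have hscale : y - x = x * y * (x⁻¹ - y⁻¹) := by field_simp
  calc (y - x) * ∑ a ∈ Icc 1 c, (x ^ a)⁻¹ * (y ^ (c + 1 - a))⁻¹
      = x * ((x⁻¹ - y⁻¹) * ∑ a ∈ Ico 1 (c + 1), x⁻¹ ^ a * y⁻¹ ^ (c + 1 - 1 - a)) := by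
        rw [hfactor, hscale]; field_simp
    _ = (x ^ c)⁻¹ - (y ^ c)⁻¹ := by
        rw [hgeom, add_tsub_cancel_right, mul_sub, pow_one, pow_succ', mul_inv_cancel_left₀ hx,
          mul_inv_cancel_left₀ hx, inv_pow, inv_pow]

section Tuples

variable {n k : ℕ}

theorem mem_Ikr {r : ℕ} {kv : Fin n → ℕ} : kv ∈ Ikr n k r ↔
    (∀ i, 1 ≤ kv i) ∧ (∀ i : Fin n, (i : ℕ) = n - 1 → 2 ≤ kv i) ∧
      (∑ i, kv i) = k ∧ ∀ i : Fin n, (i : ℕ) + 2 ≤ r → kv i = 1 := by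
  rw [Ikr, mem_filter, and_iff_right_iff_imp]
  rintro ⟨-, -, rfl, -⟩
  exact Fintype.mem_piFinset.mpr fun i =>
    mem_range_succ_iff.mpr (single_le_sum (fun _ _ => Nat.zero_le _) (mem_univ i))

theorem mem_Ikr_add_two {kv : Fin n → ℕ} {i : Fin n} :
    kv ∈ Ikr n k (i + 2) ↔ kv ∈ Ikr n k (i + 1) ∧ kv i = 1 := by
  have hones : (∀ x : Fin n, (x : ℕ) + 2 ≤ i + 2 → kv x = 1) ↔
      (∀ x : Fin n, (x : ℕ) + 2 ≤ i + 1 → kv x = 1) ∧ kv i = 1 := by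
    refine ⟨fun h => ⟨fun x hx => h x (by omega), h i le_rfl⟩, fun ⟨h, hi⟩ x hx => ?_⟩
    rcases eq_or_ne x i with rfl | hne
    · exact hi
    · exact h x (by omega)
  simp only [mem_Ikr, hones, and_assoc]

theorem redistribute_mem_Ikr {r a : ℕ} {kv : Fin n → ℕ} {i j : Fin n} (hkv : kv ∈ Ikr n k r)
    (hr : r ≤ i + 1) (hij : i < j) (hj : (j : ℕ) + 1 < n) (ha : 1 ≤ a) (ha' : a < kv i + kv j) :
    redistribute i j a kv ∈ Ikr n k r := by
  obtain ⟨hpos, hlast, hsum, hones⟩ := mem_Ikr.mp hkv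
  refine mem_Ikr.mpr ⟨fun x => ?_, fun x hx => ?_, ?_, fun x hx => ?_⟩
  · have := hpos x
    simp only [redistribute, Function.update_apply]
    split_ifs <;> omega
  · rw [redistribute_apply_of_ne (by omega) (by omega)]
    exact hlast x hx
  · rw [sum_redistribute hij.ne ha'.le, hsum]
  · rw [redistribute_apply_of_ne (by omega) (by omega)]
    exact hones x hx

theorem sum_Ikr_eq_sum_sum_redistribute {M : Type*} [AddCommMonoid M] {i j : Fin n}
    (hij : i < j) (hj : (j : ℕ) + 1 < n) (F : (Fin n → ℕ) → M) :
    ∑ kv ∈ Ikr n k (i + 1), F kv =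
      ∑ kv ∈ Ikr n k (i + 2), ∑ a ∈ Icc 1 (kv j), F (redistribute i j a kv) := by
  rw [sum_sigma']
  symm
  refine sum_bij' (fun x _ => redistribute i j x.2 x.1)
    (fun kv _ => ⟨redistribute i j 1 kv, kv i⟩) ?_ ?_ ?_ ?_ fun _ _ => rfl
  · rintro ⟨kv, a⟩ hx
    simp only [mem_sigma, mem_Icc, mem_Ikr_add_two] at hx
    obtain ⟨⟨hkv, hi⟩, ha, haj⟩ := hx
    exact redistribute_mem_Ikr hkv le_rfl hij hj ha (by simp only; omega)
  · intro kv hkv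
    have hpos := (mem_Ikr.mp hkv).1
    have hi := hpos i
    have hj' := hpos j
    simp only [mem_sigma, mem_Icc, mem_Ikr_add_two, redistribute_apply_left hij.ne,
      redistribute_apply_right]
    exact ⟨⟨redistribute_mem_Ikr hkv le_rfl hij hj le_rfl (by omega), trivial⟩, hi, by omega⟩
  · rintro ⟨kv, a⟩ hx
    simp only [mem_sigma, mem_Icc, mem_Ikr_add_two] at hx
    obtain ⟨⟨-, hi⟩, -, haj⟩ := hx
    simp only [redistribute_apply_left hij.ne]
    rw [redistribute_redistribute hij.ne (by omega), ← hi, redistribute_eq_self]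
  · intro kv hkv
    have hj' := (mem_Ikr.mp hkv).1 j
    simp only
    rw [redistribute_redistribute hij.ne (by omega), redistribute_eq_self]

theorem kval_add_one (kv : Fin n → ℕ) (i : Fin n) : kval n kv (i + 1) = kv i := by
  simp [kval]

end Tuples

theorem PS_zero {N : ℕ} (p : Fin N → ℕ) : PS p 0 = 0 := by
  simp [PS]

theorem PS_pos {N j : ℕ} (p : Fin N → ℕ) (hN : 0 < N) (hj : 0 < j) : 0 < PS p j :=
  sum_pos (fun _ _ => Nat.succ_pos _) ⟨⟨0, hN⟩, by simpa using hj⟩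

section Factors

variable {n m l : ℕ} {p : Fin (n - l) → ℕ}

theorem Bf_eq_Bf_succ_mul_PS {t : ℕ} (hlt : l ≤ t) (hln : l < n) :
    Bf n l t p = Bf n l (t + 1) p * PS p (t + 1 - l) := by
  have hPS : (PS p (t + 1 - l) : ℝ) ≠ 0 :=
    Nat.cast_ne_zero.mpr (PS_pos p (by omega) (by omega)).ne'
  rw [Nat.sub_add_comm hlt] at hPS ⊢
  rw [Bf, Bf, Nat.sub_add_comm hlt, prod_Icc_succ_top (by omega), inv_mul_cancel_right₀ hPS]

theorem Cf_eq_mul_Cf_succ {r : ℕ} (hr : r ≤ n) (kv : Fin n → ℕ) :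
    Cf n m l r p kv = (((m + PS p (r - l) : ℕ) : ℝ) ^ kval n kv r)⁻¹ * Cf n m l (r + 1) p kv := by
  rw [Cf, Cf, Icc_add_one_left_eq_Ioc, ← mul_prod_Ioc_eq_prod_Icc hr]

theorem Cf_congr {r : ℕ} {kv kw : Fin n → ℕ} (h : ∀ i : Fin n, r ≤ i + 1 → kv i = kw i) :
    Cf n m l r p kv = Cf n m l r p kw := by
  refine prod_congr rfl fun x hx => ?_
  obtain ⟨hrx, -⟩ := mem_Icc.mp hx
  congr 2
  unfold kval
  split_ifs with hxn
  · exact h _ (by simp only; omega)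
  · rfl

theorem Cf_redistribute {a : ℕ} {i j : Fin n} (hij : i < j) (kv : Fin n → ℕ) :
    Cf n m l (j + 1) p (redistribute i j a kv) =
      (((m + PS p (j + 1 - l) : ℕ) : ℝ) ^ (kv i + kv j - a))⁻¹ * Cf n m l (j + 2) p kv := by
  rw [Cf_eq_mul_Cf_succ j.isLt, kval_add_one, redistribute_apply_right,
    Cf_congr fun x hx => redistribute_apply_of_ne (by omega) (by omega)]

theorem PS_mul_sum_redistribute {i j : Fin n} (hm : m ≠ 0) (hij : i < j) {kv : Fin n → ℕ}
    (hi : kv i = 1) :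
    PS p (j + 1 - l) * ∑ a ∈ Icc 1 (kv j), ((m : ℝ) ^ a)⁻¹ *
        Cf n m l (j + 1) p (redistribute i j a kv) =
      ((m : ℝ) ^ kv j)⁻¹ * Cf n m l (j + 2) p kv - Cf n m l (j + 1) p kv := by
  have hm' : (m : ℝ) ≠ 0 := Nat.cast_ne_zero.mpr hm
  have hmP : ((m + PS p (j + 1 - l) : ℕ) : ℝ) ≠ 0 := Nat.cast_ne_zero.mpr (by omega)
  have hgeom := sub_mul_sum_inv_pow_mul_inv_pow hm' hmP (kv j)
  have hdiff : ((m + PS p (j + 1 - l) : ℕ) : ℝ) - m = PS p (j + 1 - l) := by push_cast; ring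
  rw [hdiff] at hgeom
  simp only [Cf_redistribute hij, hi, add_comm 1 (kv j), ← mul_assoc]
  rw [← sum_mul, ← mul_assoc, hgeom, Cf_eq_mul_Cf_succ j.isLt, kval_add_one, sub_mul]

theorem PS_mul_sum_Ikr_add_sum_Ikr_succ {t : ℕ} (k : ℕ) (hm : m ≠ 0) (ht : 1 ≤ t)
    (htn : t + 1 < n) :
    PS p (t + 1 - l) *
        ∑ kv ∈ Ikr n k t, ((m : ℝ) ^ kval n kv t)⁻¹ * Cf n m l (t + 1) p kv +
      ∑ kv ∈ Ikr n k (t + 1), Cf n m l (t + 1) p kv =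
    ∑ kv ∈ Ikr n k (t + 1), ((m : ℝ) ^ kval n kv (t + 1))⁻¹ * Cf n m l (t + 2) p kv := by
  obtain ⟨s, rfl⟩ := Nat.exists_eq_add_of_le' ht
  let i : Fin n := ⟨s, by omega⟩
  let j : Fin n := ⟨s + 1, by omega⟩
  have hij : i < j := Fin.mk_lt_mk.mpr s.lt_succ_self
  rw [sum_Ikr_eq_sum_sum_redistribute (i := i) hij htn, mul_sum, ← sum_add_distrib]
  refine sum_congr rfl fun kv hkv => ?_
  have hi : kv i = 1 := (mem_Ikr_add_two.mp hkv).2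
  have hleft (a : ℕ) : kval n (redistribute i j a kv) (s + 1) = a :=
    (kval_add_one _ i).trans (redistribute_apply_left hij.ne)
  simp only [hleft]
  rw [PS_mul_sum_redistribute hm hij hi, sub_add_cancel, kval_add_one kv j]

end Factors

/-- Lemma 3.1 of the paper: for `l ≤ t ≤ n-1`,
`∑_{r=l}^t B_{l,r}(𝐩) ∑_{𝐤∈I(k,r)} C_{l,r}(𝐩,𝐤)
  = B_{l,t}(𝐩) ∑_{𝐤∈I(k,t)} (1/m^{k_t}) C_{l,t+1}(𝐩,𝐤)`. -/
theorem telescoping_BC (n k m l t : ℕ) (hn : 1 ≤ n) (hk : n + 1 ≤ k) (hm : 1 ≤ m)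
    (hl : 1 ≤ l) (hlt : l ≤ t) (htn : t ≤ n - 1) (p : Fin (n - l) → ℕ) :
    ∑ r ∈ Finset.Icc l t, Bf n l r p * ∑ kv ∈ Ikr n k r, Cf n m l r p kv
    = Bf n l t p * ∑ kv ∈ Ikr n k t,
        ((m : ℝ) ^ kval n kv t)⁻¹ * Cf n m l (t + 1) p kv := by
  induction t, hlt using Nat.le_induction with
  | base =>
    rw [Icc_self, sum_singleton]
    simp only [Cf_eq_mul_Cf_succ (show l ≤ n by omega), tsub_self, PS_zero, add_zero]
  | succ t hlt ih =>
    rw [sum_Icc_succ_top (by omega), ih (by omega), Bf_eq_Bf_succ_mul_PS hlt (by omega), mul_assoc,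
      ← mul_add, PS_mul_sum_Ikr_add_sum_Ikr_succ k (by omega) (by omega) (by omega)]
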